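/- For every y ∈ ℝ + i(-π,π), one has the integral representation (-i/(2π))·Li₂(-e^y) = ∫_{v ∈ ℝ + i0⁺} exp(-i y v/π) / (4 v² sinh v) dv, where the contour ℝ + i0⁺ is the real line deformed to pass above 0. -/

import Mathlib

open Complex Real

/-- The principal dilogarithm, `Li₂(z) = -∫₀^z Log(1-u) du/u`. -/
noncomputable def dilog (z : ℂ) : ℂ :=
  -∫ t in (0:ℝ)..1, Complex.log (1 - (t : ℂ) * z) / (t : ℂ)

/-!
Write `Fₙ(y)` for the integral of `e^{-iyv/π} / (vⁿ sinh v)` over the line `ℝ + iε`. Moving `v`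
down by `iπ` multiplies the integrand of `F₀(y)` by `-e^{-y}`, while the difference between the
integrands of `F₀(y)` and `F₀(0)` has no pole at `0`, so that its integral does not change. Hence
`F₀(y) - F₀(0) = -e^{-y} F₀(y) + F₀(0)`. A primitive of `1 / sinh v` is `log tanh (v / 2)`, which
gives `F₀(0) = -πi`, and so `F₀(y) = -2πi e^y / (1 + e^y)`. Substituting `y + log t` for `y` and
integrating against `dt / t` over `(0, 1]` turns `Fₙ` into `πi Fₙ₊₁`; it also turns
`e^y / (1 + e^y)` into `log (1 + e^y)`, and `log (1 + e^y)` into `-Li₂(-e^y)`.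
-/

open Filter Interval MeasureTheory Set Topology

section HorizontalLine

theorem add_mul_I_ne_zero {b : ℝ} (hb : b ≠ 0) (x : ℝ) : (x : ℂ) + b * I ≠ 0 :=
  fun h => hb (by simpa using congrArg Complex.im h)

theorem tendsto_add_mul_I_comap_re (l : Filter ℝ) (b : ℝ) :
    Tendsto (fun x : ℝ => (x : ℂ) + b * I) l (comap Complex.re l) :=
  tendsto_comap_iff.2 (tendsto_id.congr fun x => by simp)

end HorizontalLine

section ContourShift

variable {E : Type*} [NormedAddCommGroup E] [NormedSpace ℂ E] {f : ℂ → E} {a b : ℝ}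

theorem tendsto_integral_vertical_segment_zero {l : Filter ℝ}
    (hf : Tendsto f (comap Complex.re l ⊓ 𝓟 (Complex.im ⁻¹' [[a, b]])) (𝓝 0)) :
    Tendsto (fun x : ℝ => ∫ t in a..b, f (x + t * I)) l (𝓝 0) := by
  refine Metric.tendsto_nhds.2 fun δ hδ => ?_
  have hη : 0 < δ / (|b - a| + 1) := by positivity
  have hsmall := eventually_comap.1 (eventually_inf_principal.1 (Metric.tendsto_nhds.1 hf _ hη))
  filter_upwards [hsmall] with x hx
  have hbound : ∀ t ∈ Ι a b, ‖f (x + t * I)‖ ≤ δ / (|b - a| + 1) := fun t ht =>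
    (dist_zero_right (f _) ▸ hx (x + t * I) (by simp) (by simpa using uIoc_subset_uIcc ht)).le
  calc dist (∫ t in a..b, f (x + t * I)) 0 ≤ δ / (|b - a| + 1) * |b - a| := by
        simpa only [dist_zero_right] using intervalIntegral.norm_integral_le_of_norm_le_const hbound
    _ < δ / (|b - a| + 1) * (|b - a| + 1) := by gcongr; exact lt_add_one _
    _ = δ := div_mul_cancel₀ _ (by positivity)

theorem integral_horizontal_line_eq_of_differentiableOn
    (hd : DifferentiableOn ℂ f (Complex.im ⁻¹' [[a, b]]))
    (hf : Tendsto f (comap Complex.re (cocompact ℝ) ⊓ 𝓟 (Complex.im ⁻¹' [[a, b]])) (𝓝 0))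
    (ha : Integrable fun x : ℝ => f (x + a * I)) (hb : Integrable fun x : ℝ => f (x + b * I)) :
    ∫ x : ℝ, f (x + a * I) = ∫ x : ℝ, f (x + b * I) := by
  rw [cocompact_eq_atBot_atTop, comap_sup, inf_sup_right, tendsto_sup] at hf
  have horizontal {c : ℝ} (hc : Integrable fun x : ℝ => f (x + c * I)) :=
    intervalIntegral_tendsto_integral hc tendsto_neg_atTop_atBot tendsto_id
  have right := tendsto_integral_vertical_segment_zero hf.2
  have left := (tendsto_integral_vertical_segment_zero hf.1).comp tendsto_neg_atTop_atBot
  have boundary := (((horizontal ha).sub (horizontal hb)).add (right.const_smul I)).sub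
    (left.const_smul I)
  have cauchy (T : ℝ) := integral_boundary_rect_eq_zero_of_differentiableOn f
    (-T + a * I) (T + b * I) (hd.mono fun z hz => by simpa using hz.2)
  simp only [smul_zero, add_zero, sub_zero] at boundary
  refine sub_eq_zero.1 (tendsto_nhds_unique boundary (tendsto_const_nhds.congr fun T => ?_))
  simpa using (cauchy T).symm

end ContourShift

section RemovableSingularity

theorem differentiableOn_dslope_div_dslope {f g : ℂ → ℂ} {c : ℂ} {U : Set ℂ} (hU : U ∈ 𝓝 c)
    (hf : DifferentiableOn ℂ f U) (hg : DifferentiableOn ℂ g U) (hg' : deriv g c ≠ 0)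
    (hgc : ∀ z ∈ U, z ≠ c → g z ≠ g c) :
    DifferentiableOn ℂ (fun z => dslope f c z / dslope g c z) U := by
  refine ((differentiableOn_dslope hU).2 hf).div ((differentiableOn_dslope hU).2 hg) fun z hz => ?_
  rcases eq_or_ne z c with rfl | hzc
  · rwa [dslope_same]
  · rw [dslope_of_ne _ hzc, slope_def_field]
    exact div_ne_zero (sub_ne_zero.2 (hgc z hz hzc)) (sub_ne_zero.2 hzc)

theorem dslope_div_dslope_of_ne {𝕜 : Type*} [NontriviallyNormedField 𝕜] {f g : 𝕜 → 𝕜} {c z : 𝕜}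
    (hz : z ≠ c) :
    dslope f c z / dslope g c z = (f z - f c) / (g z - g c) := by
  rw [dslope_of_ne _ hz, dslope_of_ne _ hz, slope_def_field, slope_def_field,
    div_div_div_cancel_right₀ (sub_ne_zero.2 hz)]

end RemovableSingularity

section Integrals

theorem integrable_exp_neg_mul_abs {c : ℝ} (hc : 0 < c) :
    Integrable fun x : ℝ => Real.exp (-(c * |x|)) := by
  rw [← integrableOn_univ, ← Iic_union_Ioi (a := (0 : ℝ))]
  refine IntegrableOn.union ?_ ?_
  · refine (integrableOn_exp_mul_Iic hc 0).congr_fun (fun x hx => ?_) measurableSet_Iic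
    simp [abs_of_nonpos (mem_Iic.1 hx)]
  · refine (exp_neg_integrableOn_Ioi 0 hc).congr_fun (fun x hx => ?_) measurableSet_Ioi
    simp [abs_of_pos (mem_Ioi.1 hx)]

theorem integral_integral_cpow_sub_one_mul {α : Type*} [MeasurableSpace α] {μ : Measure α}
    [SFinite μ] {s f : α → ℂ} {σ : ℝ} (hσ : 0 < σ) (hs : Measurable s) (hsσ : ∀ x, σ ≤ (s x).re)
    (hf : Integrable f μ) :
    ∫ t in (0 : ℝ)..1, ∫ x, (t : ℂ) ^ (s x - 1) * f x ∂μ = ∫ x, f x / s x ∂μ := by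
  have hint : Integrable (Function.uncurry fun (t : ℝ) x => (t : ℂ) ^ (s x - 1) * f x)
      ((volume.restrict (Ioc 0 1)).prod μ) := by
    have hpow : IntegrableOn (fun t : ℝ => t ^ (σ - 1)) (Ioc 0 1) :=
      (intervalIntegrable_iff_integrableOn_Ioc_of_le zero_le_one).1
        (intervalIntegral.intervalIntegrable_rpow' (by linarith))
    refine (hpow.mul_prod hf.norm).mono' ?_ ?_
    · exact (Measurable.aestronglyMeasurable (by fun_prop)).mul hf.aestronglyMeasurable.comp_snd
    · have hmem : ∀ᵐ p : ℝ × α ∂((volume.restrict (Ioc 0 1)).prod μ), p.1 ∈ Ioc (0 : ℝ) 1 :=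
        Measure.quasiMeasurePreserving_fst.ae (ae_restrict_mem measurableSet_Ioc)
      filter_upwards [hmem] with p hp
      rw [Function.uncurry_def, norm_mul, norm_cpow_eq_rpow_re_of_pos hp.1, sub_re, one_re]
      exact mul_le_mul_of_nonneg_right
        (Real.rpow_le_rpow_of_exponent_ge hp.1 hp.2 (sub_le_sub_right (hsσ _) 1)) (norm_nonneg _)
  rw [intervalIntegral.integral_of_le zero_le_one, integral_integral_swap hint]
  congr with x
  have hre : 0 < (s x).re := hσ.trans_le (hsσ x)
  have hne : s x ≠ 0 := fun h => hre.ne' (by simp [h])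
  rw [integral_mul_const, ← intervalIntegral.integral_of_le zero_le_one,
    integral_cpow (Or.inl (by simpa using hre)), sub_add_cancel, ofReal_one, one_cpow, ofReal_zero,
    zero_cpow hne, sub_zero, one_div, inv_mul_eq_div]

end Integrals

section Exp

theorem exp_add_log {t : ℝ} (ht : 0 < t) (y : ℂ) :
    Complex.exp (y + Real.log t) = t * Complex.exp y := by
  rw [Complex.exp_add, ← ofReal_exp, Real.exp_log ht, mul_comm]

theorem one_add_exp_mem_slitPlane {y : ℂ} (hy : |y.im| < π) : 1 + Complex.exp y ∈ slitPlane := by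
  rw [mem_slitPlane_iff, add_re, add_im, exp_re, exp_im, one_re, one_im, zero_add]
  rcases eq_or_ne y.im 0 with him | him
  · left
    rw [him, Real.cos_zero]
    positivity
  · right
    obtain ⟨h₁, h₂⟩ := abs_lt.1 hy
    exact mul_ne_zero (Real.exp_ne_zero _)
      fun hsin => him ((Real.sin_eq_zero_iff_of_lt_of_lt h₁ h₂).1 hsin)

end Exp

section Sinh

theorem sq_norm_sinh (v : ℂ) :
    ‖Complex.sinh v‖ ^ 2 = Real.sinh v.re ^ 2 + Real.sin v.im ^ 2 := by
  nth_rw 1 [← re_add_im v]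
  rw [Complex.sq_norm, Complex.sinh_add, Complex.sinh_mul_I, Complex.cosh_mul_I,
    ← ofReal_sinh, ← ofReal_cosh, ← ofReal_sin, ← ofReal_cos, ← mul_assoc, ← ofReal_mul,
    ← ofReal_mul, normSq_add_mul_I]
  linear_combination Real.sinh v.re ^ 2 * Real.sin_sq_add_cos_sq v.im +
    Real.sin v.im ^ 2 * Real.cosh_sq v.re

theorem sinh_abs_re_le_norm_sinh (v : ℂ) : Real.sinh |v.re| ≤ ‖Complex.sinh v‖ := by
  rw [← Real.abs_sinh, ← abs_norm, ← sq_le_sq, sq_norm_sinh]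
  exact le_add_of_nonneg_right (sq_nonneg _)

theorem sinh_ne_zero_of_abs_im_lt_pi {v : ℂ} (hv : v ≠ 0) (him : |v.im| < π) :
    Complex.sinh v ≠ 0 := by
  intro h
  have hsum := sq_norm_sinh v
  rw [h, norm_zero, zero_pow two_ne_zero] at hsum
  obtain ⟨hsinh, hsin⟩ := (add_eq_zero_iff_of_nonneg (sq_nonneg _) (sq_nonneg _)).1 hsum.symm
  have hre : v.re = 0 := Real.sinh_eq_zero.1 (sq_eq_zero_iff.1 hsinh)
  obtain ⟨h₁, h₂⟩ := abs_lt.1 him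
  exact hv (Complex.ext hre ((Real.sin_eq_zero_iff_of_lt_of_lt h₁ h₂).1 (sq_eq_zero_iff.1 hsin)))

theorem exp_div_four_le_sinh {x : ℝ} (hx : 1 ≤ x) : Real.exp x / 4 ≤ Real.sinh x := by
  have hmul : Real.exp x * Real.exp (-x) = 1 := by
    rw [← Real.exp_add, add_neg_cancel, Real.exp_zero]
  have hexp : 2 ≤ Real.exp x := by linarith [Real.add_one_le_exp x]
  rw [Real.sinh_eq]
  nlinarith [Real.exp_pos (-x)]

end Sinh

section InvSinh

theorem im_sub_one_div_add_one_pos {w : ℂ} (hw : 0 < w.im) : 0 < ((w - 1) / (w + 1)).im := by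
  have hw' : w + 1 ≠ 0 := fun h => hw.ne' (by simpa using congrArg Complex.im h)
  have him : ((w - 1) / (w + 1)).im = 2 * w.im / normSq (w + 1) := by
    simp only [div_im, sub_re, sub_im, add_re, add_im, one_re, one_im]
    ring
  rw [him]
  have := normSq_pos.2 hw'
  positivity

theorem hasDerivAt_log_exp_sub_one_div_exp_add_one {v : ℂ} (hv : 0 < (Complex.exp v).im) :
    HasDerivAt (fun v => Complex.log (-I * ((Complex.exp v - 1) / (Complex.exp v + 1))))
      (Complex.sinh v)⁻¹ v := by
  have hpos := im_sub_one_div_add_one_pos hv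
  have hslit : -I * ((Complex.exp v - 1) / (Complex.exp v + 1)) ∈ slitPlane :=
    Or.inl (by simpa using hpos)
  have hadd : Complex.exp v + 1 ≠ 0 := fun h => by simp [h] at hpos
  have hexp := Complex.hasDerivAt_exp v
  convert! (((hexp.sub_const 1).fun_div (hexp.add_const 1) hadd).const_mul (-I)).clog hslit using 1
  have hsinh : Complex.sinh v =
      (Complex.exp v - 1) * (Complex.exp v + 1) / (2 * Complex.exp v) := by
    rw [Complex.sinh, Complex.exp_neg]
    field_simp
    ring
  rw [hsinh]
  field_simp
  ring

theorem tendsto_exp_sub_one_div_exp_add_one_atBot (b : ℝ) :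
    Tendsto (fun x : ℝ => (Complex.exp (x + b * I) - 1) / (Complex.exp (x + b * I) + 1))
      atBot (𝓝 (-1)) := by
  have hexp : Tendsto (fun x : ℝ => Complex.exp (x + b * I)) atBot (𝓝 0) :=
    tendsto_exp_comap_re_atBot.comp (tendsto_add_mul_I_comap_re atBot b)
  simpa using! (hexp.sub_const 1).div (hexp.add_const 1) (by simp)

theorem tendsto_exp_sub_one_div_exp_add_one_atTop (b : ℝ) :
    Tendsto (fun x : ℝ => (Complex.exp (x + b * I) - 1) / (Complex.exp (x + b * I) + 1))
      atTop (𝓝 1) := by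
  have h := ((tendsto_exp_sub_one_div_exp_add_one_atBot (-b)).comp tendsto_neg_atTop_atBot).neg
  rw [neg_neg] at h
  refine h.congr fun x => ?_
  have hneg : ((-x : ℝ) : ℂ) + (-b : ℝ) * I = -(x + b * I) := by
    push_cast
    ring
  rw [Function.comp_apply, hneg, Complex.exp_neg, ← mul_div_mul_left _ _ (Complex.exp_ne_zero _),
    mul_sub, mul_add, mul_inv_cancel₀ (Complex.exp_ne_zero _), mul_one, ← neg_div, neg_sub,
    add_comm (1 : ℂ)]

end InvSinh

/-- The integrand `e^{-iyv/π} / (vⁿ sinh v)`: up to a constant factor, its integral over the contour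
`ℝ + i0⁺` is the polylogarithm `Liₙ(-e^y)`, the theorem being the case `n = 2`. -/
noncomputable def polylogKernel (n : ℕ) (y v : ℂ) : ℂ :=
  Complex.exp (-I * y * v / π) / (v ^ n * Complex.sinh v)

section Kernel

variable {y : ℂ}

theorem norm_polylogKernel_le (n : ℕ) (y : ℂ) {v : ℂ} (hre : 1 ≤ |v.re|) (him : |v.im| ≤ π) :
    ‖polylogKernel n y v‖ ≤ 4 * Real.exp |y.re| * Real.exp (-((1 - |y.im| / π) * |v.re|)) := by
  have hexponent : (-I * y * v / π).re ≤ |y.re| + |y.im| / π * |v.re| := by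
    have hre' : (-I * y * v / π).re = y.re * v.im / π + y.im * v.re / π := by
      rw [div_ofReal_re]
      simp
      ring
    have h₁ : y.re * v.im ≤ |y.re| * π :=
      (le_abs_self _).trans (abs_mul y.re v.im ▸ by gcongr)
    have h₂ : y.im * v.re ≤ |y.im| * |v.re| := abs_mul y.im v.re ▸ le_abs_self _
    rw [hre', div_mul_eq_mul_div]
    gcongr
    exact (div_le_iff₀ pi_pos).2 h₁
  have hdenom : Real.exp |v.re| / 4 ≤ ‖v ^ n * Complex.sinh v‖ := by
    rw [norm_mul, norm_pow]
    exact ((exp_div_four_le_sinh hre).trans (sinh_abs_re_le_norm_sinh v)).trans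
      (le_mul_of_one_le_left (norm_nonneg _) (one_le_pow₀ (hre.trans (abs_re_le_norm v))))
  calc ‖polylogKernel n y v‖
      ≤ Real.exp (|y.re| + |y.im| / π * |v.re|) / (Real.exp |v.re| / 4) := by
        rw [polylogKernel, norm_div, Complex.norm_exp]
        gcongr
    _ = 4 * Real.exp |y.re| * Real.exp (-((1 - |y.im| / π) * |v.re|)) := by
        rw [show -((1 - |y.im| / π) * |v.re|) = |y.im| / π * |v.re| - |v.re| by ring,
          Real.exp_sub, Real.exp_add]
        field_simp

theorem isBigO_polylogKernel (n : ℕ) (y : ℂ) :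
    polylogKernel n y =O[comap Complex.re (cocompact ℝ) ⊓ 𝓟 {v | |v.im| ≤ π}]
      fun v => Real.exp (-((1 - |y.im| / π) * |v.re|)) := by
  refine Asymptotics.IsBigO.of_bound (4 * Real.exp |y.re|) (eventually_inf_principal.2 ?_)
  have hlarge : ∀ᶠ x in cocompact ℝ, 1 ≤ |x| := tendsto_norm_cocompact_atTop.eventually_ge_atTop 1
  filter_upwards [hlarge.comap Complex.re] with v hre him
  rw [Real.norm_of_nonneg (Real.exp_pos _).le]
  exact norm_polylogKernel_le n y hre him

theorem one_sub_abs_im_div_pi_pos (hy : |y.im| < π) : 0 < 1 - |y.im| / π :=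
  sub_pos.2 ((div_lt_one pi_pos).2 hy)

theorem tendsto_polylogKernel_nhds_zero (n : ℕ) (hy : |y.im| < π) :
    Tendsto (polylogKernel n y) (comap Complex.re (cocompact ℝ) ⊓ 𝓟 {v | |v.im| ≤ π}) (𝓝 0) := by
  refine (isBigO_polylogKernel n y).trans_tendsto (Tendsto.mono_left ?_ inf_le_left)
  have hexp : Tendsto (fun x : ℝ => Real.exp (-((1 - |y.im| / π) * |x|))) (cocompact ℝ) (𝓝 0) :=
    Real.tendsto_exp_neg_atTop_nhds_zero.comp
      (tendsto_norm_cocompact_atTop.const_mul_atTop (one_sub_abs_im_div_pi_pos hy))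
  exact hexp.comp tendsto_comap

theorem integrable_polylogKernel (n : ℕ) (hy : |y.im| < π) {b : ℝ} (hb : b ≠ 0) (hbπ : |b| < π) :
    Integrable fun x : ℝ => polylogKernel n y (x + b * I) := by
  have hcont : Continuous fun x : ℝ => polylogKernel n y (x + b * I) := by
    refine Continuous.div (by fun_prop) (by fun_prop) fun x => ?_
    have hv := add_mul_I_ne_zero hb x
    exact mul_ne_zero (pow_ne_zero n hv) (sinh_ne_zero_of_abs_im_lt_pi hv (by simpa using hbπ))
  have hline : Tendsto (fun x : ℝ => (x : ℂ) + b * I) (cocompact ℝ)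
      (comap Complex.re (cocompact ℝ) ⊓ 𝓟 {v | |v.im| ≤ π}) := by
    refine tendsto_inf.2 ⟨tendsto_add_mul_I_comap_re _ b, ?_⟩
    exact tendsto_principal.2 (Eventually.of_forall fun x => by simpa using hbπ.le)
  refine hcont.locallyIntegrable.integrable_of_isBigO_cocompact
    ((isBigO_polylogKernel n y).comp_tendsto hline) (Integrable.integrableAtFilter ?_ _)
  simpa [Function.comp_def] using integrable_exp_neg_mul_abs (one_sub_abs_im_div_pi_pos hy)

theorem polylogKernel_zero_sub_pi_mul_I (y v : ℂ) :
    polylogKernel 0 y (v - π * I) = -Complex.exp (-y) * polylogKernel 0 y v := by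
  have hexponent : -I * y * (v - π * I) / π = -y + -I * y * v / π := by
    field_simp
    linear_combination y * π * I_sq
  rw [polylogKernel, polylogKernel, hexponent, Complex.exp_add, Complex.sinh_sub_pi_mul_I]
  ring

/-- Both kernels have residue `1` at their pole `0`. -/
theorem exists_differentiableOn_eq_polylogKernel_zero_sub (y : ℂ) :
    ∃ g : ℂ → ℂ, DifferentiableOn ℂ g {v | |v.im| < π} ∧
      EqOn g (polylogKernel 0 y - polylogKernel 0 0) {0}ᶜ := by
  have hstrip : {v : ℂ | |v.im| < π} ∈ 𝓝 0 :=
    (isOpen_lt (by fun_prop) (by fun_prop)).mem_nhds (by simpa using pi_pos)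
  refine ⟨fun v => dslope (fun v => Complex.exp (-I * y * v / π)) 0 v / dslope Complex.sinh 0 v,
    differentiableOn_dslope_div_dslope hstrip (by fun_prop) (by fun_prop) (by simp) ?_, ?_⟩
  · intro v him hv
    rw [Complex.sinh_zero]
    exact sinh_ne_zero_of_abs_im_lt_pi hv him
  · intro v hv
    simp only [dslope_div_dslope_of_ne hv]
    simp [polylogKernel, sub_div]

theorem integral_polylogKernel_zero_sub_eq (hy : |y.im| < π) {a b : ℝ} (ha : a ≠ 0)
    (haπ : |a| < π) (hb : b ≠ 0) (hbπ : |b| < π) :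
    ∫ x : ℝ, (polylogKernel 0 y - polylogKernel 0 0) (x + a * I) =
      ∫ x : ℝ, (polylogKernel 0 y - polylogKernel 0 0) (x + b * I) := by
  obtain ⟨g, hg, hg_eq⟩ := exists_differentiableOn_eq_polylogKernel_zero_sub y
  have h0 : |(0 : ℂ).im| < π := by simpa using pi_pos
  have hstrip : Complex.im ⁻¹' [[a, b]] ⊆ {v | |v.im| < π} := fun v hv =>
    abs_lt.2 (ordConnected_Ioo.uIcc_subset (abs_lt.1 haπ) (abs_lt.1 hbπ) hv)
  have hg_line {c : ℝ} (hc : c ≠ 0) (x : ℝ) := hg_eq (add_mul_I_ne_zero hc x)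
  have hg_int {c : ℝ} (hc : c ≠ 0) (hcπ : |c| < π) : Integrable fun x : ℝ => g (x + c * I) := by
    simpa only [hg_line hc] using!
      (integrable_polylogKernel 0 hy hc hcπ).sub (integrable_polylogKernel 0 h0 hc hcπ)
  have hg_tendsto : Tendsto g (comap Complex.re (cocompact ℝ) ⊓ 𝓟 (Complex.im ⁻¹' [[a, b]]))
      (𝓝 0) := by
    have hsub := (tendsto_polylogKernel_nhds_zero 0 hy).sub (tendsto_polylogKernel_nhds_zero 0 h0)
    rw [sub_zero] at hsub
    refine (hsub.mono_left ?_).congr' ?_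
    · exact inf_le_inf_left _ (principal_mono.2 fun v hv => (mem_ofPred.1 (hstrip hv)).le)
    · have hne : ∀ᶠ x in cocompact ℝ, x ≠ 0 := (finite_singleton 0).isCompact.compl_mem_cocompact
      filter_upwards [mem_inf_of_left (hne.comap Complex.re)] with v hv
      exact (hg_eq fun h => hv (congrArg Complex.re (mem_singleton_iff.1 h))).symm
  simpa only [hg_line ha, hg_line hb] using integral_horizontal_line_eq_of_differentiableOn
    (hg.mono hstrip) hg_tendsto (hg_int ha haπ) (hg_int hb hbπ)

end Kernel

section Contour

variable {y : ℂ} {ε : ℝ}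

theorem integral_polylogKernel_zero_zero (hε : 0 < ε) (hεπ : ε < π) :
    ∫ x : ℝ, polylogKernel 0 0 (x + ε * I) = -(π * I) := by
  have hkernel (v : ℂ) : polylogKernel 0 0 v = (Complex.sinh v)⁻¹ := by simp [polylogKernel]
  have hderiv (x : ℝ) : HasDerivAt (fun x : ℝ => Complex.log
      (-I * ((Complex.exp (x + ε * I) - 1) / (Complex.exp (x + ε * I) + 1))))
      (polylogKernel 0 0 (x + ε * I)) x := by
    have him : 0 < (Complex.exp (x + ε * I)).im := by
      simpa [Complex.exp_im] using mul_pos (Real.exp_pos x) (sin_pos_of_pos_of_lt_pi hε hεπ)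
    rw [hkernel]
    exact ((hasDerivAt_log_exp_sub_one_div_exp_add_one him).comp_add_const _ _).comp_ofReal
  have hbot := ((tendsto_exp_sub_one_div_exp_add_one_atBot ε).const_mul (-I)).clog
    (by simp [mem_slitPlane_iff])
  have htop := ((tendsto_exp_sub_one_div_exp_add_one_atTop ε).const_mul (-I)).clog
    (by simp [mem_slitPlane_iff])
  rw [integral_of_hasDerivAt_of_tendsto hderiv (integrable_polylogKernel 0 (by simpa using pi_pos)
    hε.ne' (by rwa [abs_of_pos hε])) hbot htop, mul_one, neg_mul_neg, mul_one, log_neg_I, log_I]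
  ring

theorem integral_polylogKernel_zero (hy : |y.im| < π) (hε : 0 < ε) (hεπ : ε < π) :
    ∫ x : ℝ, polylogKernel 0 y (x + ε * I) =
      -(2 * π * I) * (Complex.exp y / (1 + Complex.exp y)) := by
  have habs : |ε| < π := by rwa [abs_of_pos hε]
  have hsub : ε - π ≠ 0 := (sub_neg.2 hεπ).ne
  have habs' : |ε - π| < π := abs_lt.2 ⟨by linarith, by linarith⟩
  have h0 : |(0 : ℂ).im| < π := by simpa using pi_pos
  have hlower {z : ℂ} : ∫ x : ℝ, polylogKernel 0 z (x + (ε - π : ℝ) * I) =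
      -Complex.exp (-z) * ∫ x : ℝ, polylogKernel 0 z (x + ε * I) := by
    rw [← integral_const_mul]
    congr with x
    rw [← polylogKernel_zero_sub_pi_mul_I]
    push_cast
    ring_nf
  have hshift := integral_polylogKernel_zero_sub_eq hy hε.ne' habs hsub habs'
  simp only [Pi.sub_apply] at hshift
  rw [integral_sub (integrable_polylogKernel 0 hy hε.ne' habs)
      (integrable_polylogKernel 0 h0 hε.ne' habs),
    integral_sub (integrable_polylogKernel 0 hy hsub habs')
      (integrable_polylogKernel 0 h0 hsub habs'), hlower, hlower,
    integral_polylogKernel_zero_zero hε hεπ, neg_zero, Complex.exp_zero, Complex.exp_neg] at hshift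
  have hne := slitPlane_ne_zero (one_add_exp_mem_slitPlane hy)
  field_simp at hshift ⊢
  linear_combination hshift

theorem polylogKernel_add_log (n : ℕ) (y v : ℂ) {t : ℝ} (ht : 0 < t) :
    (t : ℂ)⁻¹ * polylogKernel n (y + Real.log t) v =
      (t : ℂ) ^ (-I * v / π - 1) * polylogKernel n y v := by
  have ht' : (t : ℂ) ≠ 0 := by exact_mod_cast ht.ne'
  have hexponent : -I * (y + Real.log t) * v / π =
      Real.log t * (-I * v / π) + -I * y * v / π := by ring
  rw [polylogKernel, polylogKernel, hexponent, Complex.exp_add, cpow_sub _ _ ht', cpow_one,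
    cpow_def_of_ne_zero ht', ← ofReal_log ht.le]
  ring

theorem polylogKernel_div (n : ℕ) (y v : ℂ) :
    polylogKernel n y v / (-I * v / π) = π * I * polylogKernel (n + 1) y v := by
  rw [div_eq_mul_inv, inv_div, neg_mul, div_neg, ← div_div, div_I, polylogKernel, polylogKernel,
    pow_succ]
  ring

theorem integral_inv_mul_integral_polylogKernel_add_log (n : ℕ) (hy : |y.im| < π) (hε : 0 < ε)
    (hεπ : ε < π) :
    ∫ t in (0 : ℝ)..1, (t : ℂ)⁻¹ * ∫ x : ℝ, polylogKernel n (y + Real.log t) (x + ε * I) =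
      π * I * ∫ x : ℝ, polylogKernel (n + 1) y (x + ε * I) := by
  have hre (x : ℝ) : ε / π ≤ (-I * (x + ε * I) / π).re := by
    rw [div_ofReal_re]
    simp
  have hint := integrable_polylogKernel n hy hε.ne' (by rwa [abs_of_pos hε])
  rw [← integral_const_mul]
  simp_rw [← polylogKernel_div]
  rw [← integral_integral_cpow_sub_one_mul (div_pos hε pi_pos) (by fun_prop) hre hint,
    intervalIntegral.integral_of_le zero_le_one, intervalIntegral.integral_of_le zero_le_one]
  refine setIntegral_congr_fun measurableSet_Ioc fun t ht => ?_
  simp only [← integral_const_mul, polylogKernel_add_log n y _ ht.1]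

end Contour

section Polylog

variable {y : ℂ} {ε : ℝ}

theorem log_one_add_exp_eq_integral (hy : |y.im| < π) :
    Complex.log (1 + Complex.exp y) = ∫ t in (0 : ℝ)..1, (t : ℂ)⁻¹ *
      (Complex.exp (y + Real.log t) / (1 + Complex.exp (y + Real.log t))) := by
  rw [log_eq_integral (one_add_exp_mem_slitPlane hy), ← intervalIntegral.integral_const_mul,
    intervalIntegral.integral_of_le zero_le_one, intervalIntegral.integral_of_le zero_le_one]
  refine setIntegral_congr_fun measurableSet_Ioc fun t ht => ?_
  have ht' : (t : ℂ) ≠ 0 := by exact_mod_cast ht.1.ne'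
  simp only [exp_add_log ht.1, real_smul]
  field_simp

theorem dilog_neg_exp_eq_integral (y : ℂ) :
    dilog (-Complex.exp y) = -∫ t in (0 : ℝ)..1, (t : ℂ)⁻¹ *
      Complex.log (1 + Complex.exp (y + Real.log t)) := by
  rw [dilog, intervalIntegral.integral_of_le zero_le_one,
    intervalIntegral.integral_of_le zero_le_one]
  congr 1
  refine setIntegral_congr_fun measurableSet_Ioc fun t ht => ?_
  simp only [exp_add_log ht.1, mul_neg, sub_neg_eq_add, div_eq_inv_mul]

theorem log_one_add_exp_eq_integral_polylogKernel (hy : |y.im| < π) (hε : 0 < ε) (hεπ : ε < π) :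
    Complex.log (1 + Complex.exp y) = -(1 / 2) * ∫ x : ℝ, polylogKernel 1 y (x + ε * I) := by
  have him (t : ℝ) : |(y + Real.log t).im| < π := by simpa using hy
  have hstep := integral_inv_mul_integral_polylogKernel_add_log 0 hy hε hεπ
  simp_rw [integral_polylogKernel_zero (him _) hε hεπ, mul_left_comm _ (-(2 * π * I))] at hstep
  rw [intervalIntegral.integral_const_mul, ← log_one_add_exp_eq_integral hy] at hstep
  refine mul_left_cancel₀ two_pi_I_ne_zero ?_
  linear_combination -hstep

theorem dilog_neg_exp_eq_integral_polylogKernel (hy : |y.im| < π) (hε : 0 < ε) (hεπ : ε < π) :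
    dilog (-Complex.exp y) = π * I / 2 * ∫ x : ℝ, polylogKernel 2 y (x + ε * I) := by
  have him (t : ℝ) : |(y + Real.log t).im| < π := by simpa using hy
  have hstep := integral_inv_mul_integral_polylogKernel_add_log 1 hy hε hεπ
  rw [dilog_neg_exp_eq_integral]
  simp_rw [log_one_add_exp_eq_integral_polylogKernel (him _) hε hεπ, mul_left_comm _ (-(1 / 2 : ℂ))]
  rw [intervalIntegral.integral_const_mul, hstep]
  ring

end Polylog

/-- Integral representation of the dilogarithm: for `y ∈ ℝ + i(-π,π)`,
`(-i/(2π))·Li₂(-e^y) = ∫_{ℝ+i0⁺} e^{-iyv/π}/(4v² sinh v) dv`, where the contour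
`ℝ + i0⁺` is realized as the horizontal line `ℝ + iε` for any `0 < ε < π` (all such
lines give the same value, since the only pole of the integrand between them and the
real axis would be `0`). -/
theorem dilog_integral_representation (y : ℂ) (hy1 : -π < y.im) (hy2 : y.im < π)
    (ε : ℝ) (hε0 : 0 < ε) (hεπ : ε < π) :
    (-Complex.I / (2 * (π : ℂ))) * dilog (-Complex.exp y)
      = ∫ x : ℝ,
          Complex.exp (-Complex.I * y * ((x : ℂ) + (ε : ℂ) * Complex.I) / (π : ℂ)) /
            (4 * ((x : ℂ) + (ε : ℂ) * Complex.I) ^ 2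
              * Complex.sinh ((x : ℂ) + (ε : ℂ) * Complex.I)) := by
  rw [dilog_neg_exp_eq_integral_polylogKernel (abs_lt.2 ⟨hy1, hy2⟩) hε0 hεπ, ← mul_assoc,
    ← integral_const_mul]
  congr with x
  have hconst : -I / (2 * π) * (π * I / 2) = 1 / 4 := by
    field_simp
    linear_combination -4 * I_sq
  rw [hconst, polylogKernel, div_mul_div_comm, one_mul, ← mul_assoc]
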